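/- arXiv:1707.02960 — 3 statements merged into one kernel-verified Lean document; each statement's English description precedes it below -/
import Mathlib

section
/- Let Γ be a finitely generated group with finite symmetric generating set S acting by homeomorphisms on a compact metric space (Y,d), and let F ⊴ Γ be a finite normal subgroup whose action on Y is isometric. Equip Y/F with the quotient metric d([y],[y']) = min_{f∈F} d(fy, y') and with the induced action of Γ/F (generated by the image of S). Then for every t>0 the quotient map (tY, d_Γ) → (t(Y/F), d_{Γ/F}) is 1-Lipschitz and decreases distances by at most diam F, where diam F is the diameter of F in the word metric of Γ; consequently the quotient maps form a quasi-isometry of the warped cones O_Γ Y and O_{Γ/F}(Y/F) with multiplicative constant C = 1 and additive constant A = diam F. -/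
/-!
The quotient map is `1`-Lipschitz because the pullback of the warped metric of `Y/F` to `Y` is a
pseudometric obeying the constraints that define the warped metric `d_Γ`; its maximum with `d_Γ` is
a genuine metric obeying them, hence is at most `d_Γ`.

For the other inequality, put on `Y/F` the Hausdorff distance `H` between `F`-orbits with respect to
`d_Γ` (orbits are finite, so this is a metric). It obeys the constraints defining the warped metric
of `Y/F`:

* `H ≤ t·d` on `Y/F`: since `F` acts isometrically for `d`, each point of one orbit has a point of
  the other one at distance exactly the quotient distance;
* `H([y], [s y]) ≤ 1`: by normality of `F`, multiplication by `s` carries `F y` onto `F s y`.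

So `H` is at most the warped metric of `Y/F`. Given `y` and `y'`, there is then `f ∈ F` with
`d_Γ(y, f y')` bounded (up to `ε`) by the warped distance of the orbits, and
`d_Γ(f y', y') ≤ |f| ≤ diam F`. The triangle inequality is automatic for the Hausdorff
distance, but not for the infimum distance between orbits, since `F` need not act isometrically for
`d_Γ`.
-/

/-!
STATEMENT 4: For a finite normal subgroup F ⊴ Γ acting isometrically on Y, the quotient
maps (tY, d_Γ) → (t(Y/F), d_{Γ/F}) are 1-Lipschitz, decrease distances by at most
diam F, and hence form a quasi-isometry of warped cones with constants C = 1,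
A = diam F.
-/

open Metric Set

noncomputable def wordLength {G : Type*} [Group G] (S : Set G) (g : G) : ℕ :=
  sInf {n : ℕ | ∃ w : List G, (∀ x ∈ w, x ∈ S) ∧ w.length = n ∧ w.prod = g}

def IsFinSymmGen {G : Type*} [Group G] (S : Set G) : Prop :=
  S.Finite ∧ (∀ s ∈ S, s⁻¹ ∈ S) ∧ Subgroup.closure S = ⊤

def IsMetricOn {Y : Type*} (ρ : Y → Y → ℝ) : Prop :=
  (∀ y, ρ y y = 0) ∧ (∀ y y' : Y, y ≠ y' → 0 < ρ y y') ∧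
  (∀ y y' : Y, ρ y y' = ρ y' y) ∧ ∀ x y z : Y, ρ x z ≤ ρ x y + ρ y z

def IsWarpedMetric {G Y : Type*} (act : G → Y → Y) (S : Set G)
    (d : Y → Y → ℝ) (t : ℝ) (ρ : Y → Y → ℝ) : Prop :=
  IsMetricOn ρ ∧ (∀ y y', ρ y y' ≤ t * d y y') ∧
  (∀ s ∈ S, ∀ y, ρ y (act s y) ≤ 1) ∧
  ∀ ρ' : Y → Y → ℝ, IsMetricOn ρ' → (∀ y y', ρ' y y' ≤ t * d y y') →
    (∀ s ∈ S, ∀ y, ρ' y (act s y) ≤ 1) → ∀ y y', ρ' y y' ≤ ρ y y'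

def IsQIWith {X Z : Type*} (dX : X → X → ℝ) (dZ : Z → Z → ℝ)
    (C A : ℝ) (f : X → Z) : Prop :=
  (∀ x x', C⁻¹ * dX x x' - A ≤ dZ (f x) (f x')) ∧
  (∀ x x', dZ (f x) (f x') ≤ C * dX x x' + A) ∧
  ∀ z, ∃ x, dZ (f x) z ≤ A

/-- Diameter of a subset of a group in the word metric. -/
noncomputable def wordDiam {G : Type*} [Group G] (S : Set G) (F : Set G) : ℝ :=
  sSup ((fun p : G × G => (wordLength S (p.1⁻¹ * p.2) : ℝ)) '' (F ×ˢ F))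

/-- Mathlib's Hausdorff distance, transported to a metric given as a plain function `ρ`, so that it
can be used on a type that already carries another metric structure. -/
theorem exists_hausdorff {Y : Type*} {ρ : Y → Y → ℝ} (hρ : IsMetricOn ρ) :
    ∃ H : Set Y → Set Y → ℝ,
      (∀ s, H s s = 0) ∧
      (∀ s t, s.Finite → s.Nonempty → t.Finite → t.Nonempty → s ≠ t → 0 < H s t) ∧
      (∀ s t, H s t = H t s) ∧
      (∀ s t u, s.Finite → s.Nonempty → t.Finite → t.Nonempty → H s u ≤ H s t + H t u) ∧
      (∀ s t r, 0 ≤ r → (∀ x ∈ s, ∃ y ∈ t, ρ x y ≤ r) → (∀ x ∈ t, ∃ y ∈ s, ρ x y ≤ r) →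
        H s t ≤ r) ∧
      (∀ s t r x, s.Finite → s.Nonempty → t.Finite → t.Nonempty → x ∈ s → H s t < r →
        ∃ y ∈ t, ρ x y < r) := by
  let _ : MetricSpace Y :=
    { dist := ρ
      dist_self := hρ.1
      dist_comm := hρ.2.2.1
      dist_triangle := hρ.2.2.2
      eq_of_dist_eq_zero := fun {x y} h => by
        by_contra hne
        exact (hρ.2.1 x y hne).ne' h }
  have fin : ∀ s t : Set Y, s.Finite → s.Nonempty → t.Finite → t.Nonempty →
      hausdorffEDist s t ≠ ⊤ := fun s t hs hs' ht ht' =>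
    hausdorffEDist_ne_top_of_nonempty_of_bounded hs' ht' hs.isBounded ht.isBounded
  refine ⟨fun s t => hausdorffDist s t, fun s => hausdorffDist_self_zero, ?_,
    fun s t => hausdorffDist_comm, ?_, ?_, ?_⟩
  · intro s t hs hs' ht ht' hne
    refine lt_of_le_of_ne hausdorffDist_nonneg fun h => hne ?_
    exact (hs.isClosed.hausdorffDist_zero_iff_eq ht.isClosed (fin s t hs hs' ht ht')).1 h.symm
  · intro s t u hs hs' ht ht'
    exact hausdorffDist_triangle (fin s t hs hs' ht ht')
  · intro s t r hr h1 h2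
    exact hausdorffDist_le_of_mem_dist hr h1 h2
  · intro s t r x hs hs' ht ht' hx h
    exact exists_dist_lt_of_hausdorffDist_lt hx h (fin s t hs hs' ht ht')

/-- Moving a point by the product of a word in `S` costs at most the length of the word. -/
theorem dist_smul_prod_le {Γ Y : Type*} [Group Γ] [MulAction Γ Y] {S : Set Γ} {ρ : Y → Y → ℝ}
    (hρ : IsMetricOn ρ) (h1 : ∀ s ∈ S, ∀ y, ρ y (s • y) ≤ 1) (w : List Γ)
    (hw : ∀ x ∈ w, x ∈ S) (y : Y) : ρ y (w.prod • y) ≤ w.length := by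
  induction w with
  | nil => simp [hρ.1]
  | cons a w ih =>
    have hr := ih fun x hx => hw x (List.mem_cons_of_mem _ hx)
    have ha := h1 a (hw a List.mem_cons_self) (w.prod • y)
    have ht := hρ.2.2.2 y (w.prod • y) (a • w.prod • y)
    rw [List.prod_cons, mul_smul, List.length_cons]
    push_cast
    linarith

/-- For a symmetric generating set the infimum defining the word length is attained. -/
theorem exists_word {Γ : Type*} [Group Γ] {S : Set Γ} (hS : IsFinSymmGen S) (g : Γ) :
    ∃ w : List Γ, (∀ x ∈ w, x ∈ S) ∧ w.length = wordLength S g ∧ w.prod = g := by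
  have hne : {n : ℕ | ∃ w : List Γ, (∀ x ∈ w, x ∈ S) ∧ w.length = n ∧ w.prod = g}.Nonempty := by
    have hg : g ∈ (Subgroup.closure S).toSubmonoid := by rw [hS.2.2]; trivial
    rw [Subgroup.closure_toSubmonoid] at hg
    obtain ⟨w, hw, hp⟩ := Submonoid.exists_list_of_mem_closure hg
    refine ⟨w.length, w, fun x hx => ?_, rfl, hp⟩
    rcases hw x hx with h | h
    · exact h
    · simpa using hS.2.1 _ h
  exact Nat.sInf_mem hne

theorem wordLength_le_wordDiam {Γ : Type*} [Group Γ] (S : Set Γ) {F : Subgroup Γ}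
    (hF : (F : Set Γ).Finite) {f : Γ} (hf : f ∈ F) :
    (wordLength S f : ℝ) ≤ wordDiam S (F : Set Γ) := by
  refine le_csSup ((hF.prod hF).image _).bddAbove ⟨(1, f), ⟨F.one_mem, hf⟩, ?_⟩
  simp

theorem quotient_by_finite_normal_subgroup_is_QI_of_warped_cones
    {Γ Y : Type} [Group Γ] [MetricSpace Y] [CompactSpace Y] [MulAction Γ Y]
    (S : Set Γ) (hS : IsFinSymmGen S)
    (hcont : ∀ γ : Γ, Continuous fun y : Y => γ • y)
    (F : Subgroup Γ) [hFnorm : F.Normal]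
    (hFfin : (F : Set Γ).Finite)
    -- the action of F is isometric
    (hFiso : ∀ g ∈ F, Isometry fun y : Y => g • y)
    -- the quotient metric on Y/F
    (dQ : Quotient (MulAction.orbitRel F Y) → Quotient (MulAction.orbitRel F Y) → ℝ)
    (hdQ : ∀ y y' : Y, dQ (Quotient.mk _ y) (Quotient.mk _ y') =
      ⨅ g : F, dist ((g : Γ) • y) y')
    -- the induced action of Γ/F on Y/F
    (act' : Γ ⧸ F → Quotient (MulAction.orbitRel F Y) → Quotient (MulAction.orbitRel F Y))
    (hact' : ∀ (γ : Γ) (y : Y),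
      act' (QuotientGroup.mk γ) (Quotient.mk _ y) = Quotient.mk _ (γ • y))
    -- warped metrics on Y (for Γ, S) and on Y/F (for Γ/F with the image generating set)
    (dwY : ℝ → Y → Y → ℝ)
    (hdwY : ∀ t : ℝ, 0 < t →
      IsWarpedMetric (fun (γ : Γ) (y : Y) => γ • y) S dist t (dwY t))
    (dwQ : ℝ → Quotient (MulAction.orbitRel F Y) → Quotient (MulAction.orbitRel F Y) → ℝ)
    (hdwQ : ∀ t : ℝ, 0 < t →
      IsWarpedMetric act' (QuotientGroup.mk '' S) dQ t (dwQ t)) :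
    ∀ t : ℝ, 0 < t →
      -- the quotient map is 1-Lipschitz
      (∀ y y' : Y, dwQ t (Quotient.mk _ y) (Quotient.mk _ y') ≤ dwY t y y') ∧
      -- and decreases distances by at most diam F
      (∀ y y' : Y, dwY t y y' ≤ dwQ t (Quotient.mk _ y) (Quotient.mk _ y')
        + wordDiam S (F : Set Γ)) ∧
      -- consequently it is a (1, diam F)-quasi-isometry
      IsQIWith (dwY t) (dwQ t) 1 (wordDiam S (F : Set Γ))
        (Quotient.mk (MulAction.orbitRel F Y)) := by
  intro t ht
  obtain ⟨hY, hYd, hYS, hYmax⟩ := hdwY t ht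
  obtain ⟨hQ, hQd, hQS, hQmax⟩ := hdwQ t ht
  have : Finite F := hFfin
  have hlip : ∀ y y' : Y, dwQ t (Quotient.mk _ y) (Quotient.mk _ y') ≤ dwY t y y' := by
    -- The pullback of `dwQ t` vanishes on orbits; the maximum with `dwY t` separates points.
    intro y y'
    refine (le_max_left _ _).trans (hYmax
      (fun y y' => max (dwQ t (Quotient.mk _ y) (Quotient.mk _ y')) (dwY t y y'))
      ⟨fun y => ?_, fun y y' h => ?_, fun y y' => ?_, fun x y z => ?_⟩
      (fun y y' => ?_) (fun s hs y => ?_) y y')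
    · simp only [hQ.1, hY.1, max_self]
    · exact lt_max_of_lt_right (hY.2.1 y y' h)
    · exact congrArg₂ max (hQ.2.2.1 _ _) (hY.2.2.1 _ _)
    · exact max_le
        ((hQ.2.2.2 _ _ _).trans (add_le_add (le_max_left _ _) (le_max_left _ _)))
        ((hY.2.2.2 _ _ _).trans (add_le_add (le_max_right _ _) (le_max_right _ _)))
    · refine max_le ((hQd _ _).trans (mul_le_mul_of_nonneg_left ?_ ht.le)) (hYd y y')
      rw [hdQ]
      have hb : BddBelow (Set.range fun g : F => dist ((g : Γ) • y) y') :=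
        ⟨0, by rintro _ ⟨g, rfl⟩; exact dist_nonneg⟩
      simpa using ciInf_le hb 1
    · refine max_le ?_ (hYS s hs y)
      have h := hQS _ (Set.mem_image_of_mem _ hs) (Quotient.mk _ y)
      rwa [hact'] at h
  obtain ⟨H, H0, Hpos, Hsymm, Htri, Hle, Hlt⟩ := exists_hausdorff hY
  -- `O a` is the orbit `a`, seen as a subset of `Y`.
  let O : Quotient (MulAction.orbitRel F Y) → Set Y := fun a => {x | Quotient.mk _ x = a}
  have memO : ∀ x y : Y, x ∈ O (Quotient.mk _ y) ↔ ∃ g ∈ F, g • y = x := by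
    intro x y
    refine Quotient.eq.trans ?_
    constructor
    · rintro ⟨g, hg⟩
      exact ⟨g, g.2, hg⟩
    · rintro ⟨g, hg, h⟩
      exact ⟨⟨g, hg⟩, h⟩
  have Ofin : ∀ a, (O a).Finite := by
    intro a
    induction a using Quotient.inductionOn with
    | _ y =>
      refine (hFfin.image fun g => g • y).subset fun x hx => ?_
      exact (memO x y).1 hx
  have One : ∀ a, (O a).Nonempty := fun a => Quotient.exists_rep a
  have Oinj : ∀ a b, a ≠ b → O a ≠ O b := by
    intro a b hab h
    obtain ⟨x, hx⟩ := One a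
    have hx' : x ∈ O b := h ▸ hx
    exact hab (hx.symm.trans hx')
  have hHQ : ∀ a b, H (O a) (O b) ≤ dwQ t a b := by
    refine hQmax (fun a b => H (O a) (O b)) ⟨fun a => H0 _, fun a b h => ?_,
      fun a b => Hsymm _ _, fun a b c => ?_⟩ (fun a b => ?_) ?_
    · exact Hpos _ _ (Ofin a) (One a) (Ofin b) (One b) (Oinj a b h)
    · exact Htri _ _ _ (Ofin a) (One a) (Ofin b) (One b)
    · induction a using Quotient.inductionOn with
      | _ y =>
      induction b using Quotient.inductionOn with
      | _ y' =>
      rw [hdQ]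
      obtain ⟨⟨f, hf⟩, hfd⟩ := exists_eq_ciInf_of_finite (f := fun g : F => dist ((g : Γ) • y) y')
      rw [← hfd]
      refine Hle _ _ _ (mul_nonneg ht.le dist_nonneg) (fun x hx => ?_) (fun x hx => ?_)
      · obtain ⟨g, hg, rfl⟩ := (memO _ _).1 hx
        have hk : g * f⁻¹ ∈ F := F.mul_mem hg (F.inv_mem hf)
        refine ⟨(g * f⁻¹) • y', (memO _ _).2 ⟨_, hk, rfl⟩, (hYd _ _).trans_eq ?_⟩
        have := (hFiso _ hk).dist_eq (f • y) y'
        simp only [smul_smul, inv_mul_cancel_right] at this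
        rw [this]
      · obtain ⟨g, hg, rfl⟩ := (memO _ _).1 hx
        refine ⟨(g * f) • y, (memO _ _).2 ⟨_, F.mul_mem hg hf, rfl⟩, (hYd _ _).trans_eq ?_⟩
        have := (hFiso _ hg).dist_eq (f • y) y'
        rw [mul_smul, dist_comm, this]
    · rintro _ ⟨s, hs, rfl⟩ a
      induction a using Quotient.inductionOn with
      | _ y =>
      simp only [hact']
      refine Hle _ _ _ zero_le_one (fun x hx => ?_) (fun x hx => ?_)
      · obtain ⟨g, hg, rfl⟩ := (memO _ _).1 hx
        refine ⟨s • g • y, (memO _ _).2 ⟨s * g * s⁻¹, hFnorm.conj_mem g hg s, ?_⟩, hYS s hs _⟩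
        simp [smul_smul]
      · obtain ⟨g, hg, rfl⟩ := (memO _ _).1 hx
        refine ⟨(s⁻¹ * g * s) • y, (memO _ _).2 ⟨_, ?_, rfl⟩, ?_⟩
        · simpa using hFnorm.conj_mem g hg s⁻¹
        · have h := hYS s hs ((s⁻¹ * g * s) • y)
          rw [hY.2.2.1]
          simpa [smul_smul, mul_assoc] using h
  have hlow : ∀ y y' : Y, dwY t y y' ≤ dwQ t (Quotient.mk _ y) (Quotient.mk _ y')
      + wordDiam S (F : Set Γ) := by
    intro y y'
    refine le_of_forall_pos_lt_add fun ε hε => ?_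
    obtain ⟨z, hz, hyz⟩ := Hlt (O (Quotient.mk _ y)) (O (Quotient.mk _ y')) _ y
      (Ofin _) (One _) (Ofin _) (One _) rfl
      ((hHQ (Quotient.mk _ y) (Quotient.mk _ y')).trans_lt (lt_add_of_pos_right _ hε))
    obtain ⟨f, hf, rfl⟩ := (memO _ _).1 hz
    obtain ⟨w, hw, hwl, hwp⟩ := exists_word hS f
    have h1 := dist_smul_prod_le hY hYS w hw y'
    rw [hwp, hwl, hY.2.2.1] at h1
    have h2 := wordLength_le_wordDiam S hFfin hf
    have h3 := hY.2.2.2 y (f • y') y'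
    linarith
  have hD : 0 ≤ wordDiam S (F : Set Γ) :=
    (Nat.cast_nonneg _).trans (wordLength_le_wordDiam S hFfin F.one_mem)
  refine ⟨hlip, hlow, fun y y' => ?_, fun y y' => ?_, fun z => ?_⟩
  · have := hlow y y'
    rw [inv_one, one_mul]
    linarith
  · have := hlip y y'
    rw [one_mul]
    linarith
  · obtain ⟨y, rfl⟩ := Quotient.exists_rep z
    exact ⟨y, by rw [hQ.1]; exact hD⟩
end

section
/- Property A and, for every k∈ℕ, the property 'asymptotic dimension at most k' are finitely determined. Explicitly: if X is a discrete proper metric space such that the family of all bounded subsets of X has property A with a uniform function R↦S(R) (respectively, has asymptotic dimension at most k with a uniform function R↦S(R)), then X itself has property A (respectively, asymptotic dimension at most k). -/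
/-!
Both statements are compactness arguments. The finite subsets of `X` are bounded and exhaust `X`,
so along an ultrafilter on `Finset X` refining `atTop` every point of `X` eventually lies in the
given finite set (`eventually_mem_finiteUltrafilter`).

For property A, extend the maps given on the finite subsets by zero; their values lie in `[0, 1]`,
so they have a pointwise ultralimit `g`. Since `X` is proper and discrete, balls are finite, and
all the functions `f x` are supported in the fixed finite ball of radius `S(R)` about `x`. Hence
total mass and `ℓ¹`-distances are finite sums, which pass to the limit (`propA_of_bounded`).

For asymptotic dimension, put `x` in the `j`-th limit set when `x` eventually lies in the `j`-th
set of the cover of the finite subset. An ultrafilter picks one of finitely many colours, so these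
sets cover `X`. A chain in a limit set has finitely many steps, so it is eventually a chain in the
covers of the finite subsets, and the diameter bound there applies (`asdimLE_of_bounded`).
-/

/-!
STATEMENT 8: Property A and 'asymptotic dimension ≤ k' are finitely determined: if the
family of all bounded subsets of a discrete proper metric space X has property A
(resp. asymptotic dimension at most k) with a uniform function R ↦ S(R), then X itself
has property A (resp. asymptotic dimension at most k).
-/

open Metric Set

def RConn {Z : Type*} (ρ : Z → Z → ℝ) (R : ℝ) (U : Set Z) : Z → Z → Prop :=
  Relation.ReflTransGen (fun a b => a ∈ U ∧ b ∈ U ∧ ρ a b < R)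

/-- A family of "spaces" (carriers `Z i` with distance functions `ρ i`) has asymptotic
dimension at most `k`, with one common function `R ↦ S(R)`. -/
def FamAsdimLE {ι : Type*} (Z : ι → Type*) (ρ : ∀ i, Z i → Z i → ℝ) (k : ℕ) : Prop :=
  ∀ R : ℕ, 0 < R → ∃ D : ℝ, ∀ i : ι, ∃ U : Fin (k + 1) → Set (Z i),
    (∀ z : Z i, ∃ j, z ∈ U j) ∧
    ∀ j, ∀ a ∈ U j, ∀ b ∈ U j, RConn (ρ i) (R : ℝ) (U j) a b → ρ i a b ≤ D

/-- A family of "spaces" has property A, with one common function `R ↦ S(R)`. -/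
def FamPropA {ι : Type*} (Z : ι → Type*) (ρ : ∀ i, Z i → Z i → ℝ) : Prop :=
  ∀ R : ℕ, 0 < R → ∃ Sb : ℕ, ∀ i : ι, ∃ f : Z i → Z i → ℝ,
    (∀ x y, 0 ≤ f x y) ∧ (∀ x, HasSum (f x) 1) ∧
    (∀ x y, f x y ≠ 0 → ρ i x y ≤ Sb) ∧
    ∀ x x', ρ i x x' ≤ R → (∑' y, |f x y - f x' y|) ≤ 1 / R

/-- An ultrafilter on the finite subsets of `X` that contains, for each point, the family of finite
subsets containing that point. -/
noncomputable def finiteUltrafilter (X : Type*) : Ultrafilter (Finset X) :=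
  Ultrafilter.of Filter.atTop

theorem eventually_mem_finiteUltrafilter {X : Type*} (x : X) :
    ∀ᶠ s : Finset X in (finiteUltrafilter X : Filter (Finset X)), x ∈ (s : Set X) := by
  have h : ∀ᶠ s : Finset X in Filter.atTop, x ∈ (s : Set X) := by
    filter_upwards [Filter.eventually_ge_atTop ({x} : Finset X)] with s hs
    exact hs (Finset.mem_singleton_self x)
  exact Ultrafilter.of_le (Filter.atTop : Filter (Finset X)) h

theorem exists_tendsto_ultrafilter {α : Type*} (F : Ultrafilter α) (u : α → ℝ)
    (hu : ∀ a, u a ∈ Icc (0 : ℝ) 1) :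
    ∃ l, Filter.Tendsto u F (nhds l) := by
  obtain ⟨l, -, hl⟩ := (isCompact_Icc (a := (0 : ℝ)) (b := 1)).ultrafilter_le_nhds (F.map u)
    (Filter.le_principal_iff.2 (Filter.mem_map.2 (Filter.Eventually.of_forall hu)))
  exact ⟨l, hl⟩

theorem finite_closedBall_of_discrete {X : Type*} [MetricSpace X] [ProperSpace X]
    [DiscreteTopology X] (x : X) (r : ℝ) : (closedBall x r).Finite :=
  (isCompact_closedBall x r).finite_of_discrete

/-- The ultralimit of the maps on the finite subsets witnesses property A for `X` with the same
`S(R)`; finiteness of balls keeps mass from escaping in the limit. -/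
theorem propA_of_bounded (X : Type) [MetricSpace X] [ProperSpace X] [DiscreteTopology X]
    (h : FamPropA (fun A : {A : Set X // Bornology.IsBounded A} => ↥A.1)
        (fun _ a b => dist a.1 b.1)) :
    FamPropA (fun _ : Unit => X) (fun _ a b => dist a b) := by
  classical
  intro R hR
  obtain ⟨S, hS⟩ := h R hR
  refine ⟨S, fun _ => ?_⟩
  have hb : ∀ s : Finset X, Bornology.IsBounded (s : Set X) := fun s => s.finite_toSet.isBounded
  choose f hf0 hf1 hfS hfR using fun s : Finset X => hS ⟨s, hb s⟩
  let F := finiteUltrafilter X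
  -- `G s` is the map given on the finite subset `s`, extended by zero to all of `X`.
  let G : Finset X → X → X → ℝ := fun s x y =>
    if hx : x ∈ (s : Set X) then if hy : y ∈ (s : Set X) then f s ⟨x, hx⟩ ⟨y, hy⟩ else 0 else 0
  have G_eq : ∀ (s : Finset X) (x y : X) (hx : x ∈ (s : Set X)) (hy : y ∈ (s : Set X)),
      G s x y = f s ⟨x, hx⟩ ⟨y, hy⟩ := by
    intro s x y hx hy
    simp only [G, dif_pos hx, dif_pos hy]
  have G_zero : ∀ (s : Finset X) (x y : X), y ∉ (s : Set X) → G s x y = 0 := by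
    intro s x y hy
    simp only [G, dif_neg hy, dite_eq_ite, ite_self]
  have G_mem : ∀ (s : Finset X) (x y : X), G s x y ∈ Icc (0 : ℝ) 1 := by
    intro s x y
    by_cases hx : x ∈ (s : Set X)
    · by_cases hy : y ∈ (s : Set X)
      · rw [G_eq s x y hx hy]
        exact ⟨hf0 _ _ _, le_hasSum (hf1 s ⟨x, hx⟩) _ fun _ _ => hf0 _ _ _⟩
      · rw [G_zero s x y hy]; simp
    · simp only [G, dif_neg hx]; simp
  have G_supp : ∀ (s : Finset X) (x y : X), G s x y ≠ 0 → dist x y ≤ S := by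
    intro s x y hne
    by_cases hx : x ∈ (s : Set X)
    · by_cases hy : y ∈ (s : Set X)
      · rw [G_eq s x y hx hy] at hne
        exact hfS s _ _ hne
      · exact absurd (G_zero s x y hy) hne
    · exact absurd (by simp only [G, dif_neg hx]) hne
  have G_sum : ∀ (s : Finset X) (x : X), x ∈ (s : Set X) → HasSum (G s x) 1 := by
    intro s x hx
    have hsub : Function.support (G s x) ⊆ (s : Set X) := fun y hy => by
      by_contra hn
      exact hy (G_zero s x y hn)
    rw [← hasSum_subtype_iff_of_support_subset hsub]
    convert hf1 s ⟨x, hx⟩ using 1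
    funext y
    exact G_eq s x y hx y.2
  have G_dist : ∀ (s : Finset X) (x x' : X), x ∈ (s : Set X) → x' ∈ (s : Set X) → dist x x' ≤ R →
      ∑' y, |G s x y - G s x' y| ≤ 1 / R := by
    intro s x x' hx hx' hd
    have hsub : Function.support (fun y => |G s x y - G s x' y|) ⊆ (s : Set X) := fun y hy => by
      by_contra hn
      exact hy (by simp only [G_zero s x y hn, G_zero s x' y hn, sub_self, abs_zero])
    rw [← tsum_subtype_eq_of_support_subset hsub]
    convert hfR s ⟨x, hx⟩ ⟨x', hx'⟩ hd using 1
    refine tsum_congr fun y => ?_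
    rw [G_eq s x y hx y.2, G_eq s x' y hx' y.2]
  choose g hg using fun x y => exists_tendsto_ultrafilter F (fun s => G s x y)
    (fun s => G_mem s x y)
  have g_supp : ∀ x y, g x y ≠ 0 → dist x y ≤ S := by
    intro x y hne
    obtain ⟨s, hs⟩ := ((hg x y).eventually_ne hne).exists
    exact G_supp s x y hs
  -- Every `G s x` and `g x` vanishes outside `B x`, which turns all sums over `X` into finite ones.
  let B : X → Finset X := fun x => (finite_closedBall_of_discrete x S).toFinset
  have B_mem : ∀ x y, y ∉ B x → ¬ dist x y ≤ S := by
    intro x y hy hd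
    exact hy ((Set.Finite.mem_toFinset _).2 (by rwa [mem_closedBall, dist_comm]))
  have G_B : ∀ (s : Finset X) (x y : X), y ∉ B x → G s x y = 0 := fun s x y hy =>
    not_not.1 fun hne => B_mem x y hy (G_supp s x y hne)
  have g_B : ∀ x y, y ∉ B x → g x y = 0 := fun x y hy =>
    not_not.1 fun hne => B_mem x y hy (g_supp x y hne)
  refine ⟨g, ?_, ?_, g_supp, ?_⟩
  · intro x y
    exact ge_of_tendsto' (hg x y) fun s => (G_mem s x y).1
  · intro x
    have hlim : Filter.Tendsto (fun s => ∑ y ∈ B x, G s x y) F (nhds (∑ y ∈ B x, g x y)) :=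
      tendsto_finsetSum _ fun y _ => hg x y
    have hone : ∀ᶠ s : Finset X in (F : Filter (Finset X)), 1 = ∑ y ∈ B x, G s x y := by
      filter_upwards [eventually_mem_finiteUltrafilter x] with s hs
      exact (G_sum s x hs).unique (hasSum_sum_of_ne_finset_zero fun y hy => G_B s x y hy)
    have hsum : (1 : ℝ) = ∑ y ∈ B x, g x y :=
      tendsto_nhds_unique (tendsto_const_nhds.congr' hone) hlim
    rw [hsum]
    exact hasSum_sum_of_ne_finset_zero fun y hy => g_B x y hy
  · intro x x' hd
    have hlim : Filter.Tendsto (fun s => ∑ y ∈ B x ∪ B x', |G s x y - G s x' y|) F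
        (nhds (∑ y ∈ B x ∪ B x', |g x y - g x' y|)) :=
      tendsto_finsetSum _ fun y _ => ((hg x y).sub (hg x' y)).abs
    rw [tsum_eq_sum (s := B x ∪ B x') (fun y hy => by
      rw [Finset.mem_union, not_or] at hy
      rw [g_B x y hy.1, g_B x' y hy.2, sub_self, abs_zero])]
    refine le_of_tendsto hlim ?_
    filter_upwards [eventually_mem_finiteUltrafilter x, eventually_mem_finiteUltrafilter x']
      with s hs hs'
    rw [← tsum_eq_sum (L := .unconditional X) (s := B x ∪ B x') (fun y hy => by
      rw [Finset.mem_union, not_or] at hy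
      rw [G_B s x y hy.1, G_B s x' y hy.2, sub_self, abs_zero])]
    exact G_dist s x x' hs hs' hd

/-- The ultralimit of the covers of the finite subsets is a cover of `X` with the same diameter
bound: each chain has finitely many steps, so it already appears in some finite subset. -/
theorem asdimLE_of_bounded (k : ℕ) (X : Type) [MetricSpace X]
    (h : FamAsdimLE (fun A : {A : Set X // Bornology.IsBounded A} => ↥A.1)
        (fun _ a b => dist a.1 b.1) k) :
    FamAsdimLE (fun _ : Unit => X) (fun _ a b => dist a b) k := by
  intro R hR
  obtain ⟨D, hD⟩ := h R hR
  refine ⟨D, fun _ => ?_⟩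
  have hb : ∀ s : Finset X, Bornology.IsBounded (s : Set X) := fun s => s.finite_toSet.isBounded
  choose U hcov hdiam using fun s : Finset X => hD ⟨s, hb s⟩
  let F := finiteUltrafilter X
  refine ⟨fun j => {x | ∀ᶠ s : Finset X in (F : Filter (Finset X)), ∃ hx : x ∈ (s : Set X),
    (⟨x, hx⟩ : (s : Set X)) ∈ U s j}, ?_, ?_⟩
  · intro x
    have hx : ∀ᶠ s : Finset X in (F : Filter (Finset X)), ∃ j, ∃ hx : x ∈ (s : Set X),
        (⟨x, hx⟩ : (s : Set X)) ∈ U s j := by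
      filter_upwards [eventually_mem_finiteUltrafilter x] with s hs
      obtain ⟨j, hj⟩ := hcov s ⟨x, hs⟩
      exact ⟨j, hs, hj⟩
    exact Ultrafilter.eventually_exists_iff.1 hx
  · intro j a ha b _ hab
    have key : ∀ᶠ s : Finset X in (F : Filter (Finset X)), ∃ (ha : a ∈ (s : Set X)) (hb : b ∈ (s : Set X)),
        (⟨a, ha⟩ : (s : Set X)) ∈ U s j ∧ (⟨b, hb⟩ : (s : Set X)) ∈ U s j ∧
        RConn (fun p q : (s : Set X) => dist p.1 q.1) (R : ℝ) (U s j) ⟨a, ha⟩ ⟨b, hb⟩ := by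
      induction hab with
      | refl =>
        filter_upwards [ha] with s hs
        obtain ⟨h1, h2⟩ := hs
        exact ⟨h1, h1, h2, h2, Relation.ReflTransGen.refl⟩
      | tail _ hbc ih =>
        obtain ⟨hbj, hc, hlt⟩ := hbc
        filter_upwards [ih hbj, hc] with s hs hcs
        obtain ⟨h1, h2, h3, h4, h5⟩ := hs
        obtain ⟨h6, h7⟩ := hcs
        exact ⟨h1, h6, h3, h7, Relation.ReflTransGen.tail h5 ⟨h4, h7, hlt⟩⟩
    obtain ⟨s, h1, h2, h3, h4, h5⟩ := key.exists
    exact hdiam s j _ h3 _ h4 h5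

theorem propertyA_and_asdim_are_finitely_determined
    (k : ℕ) (X : Type) [MetricSpace X] [ProperSpace X] [DiscreteTopology X] :
    (FamPropA (fun A : {A : Set X // Bornology.IsBounded A} => ↥A.1)
        (fun _ a b => dist a.1 b.1) →
      FamPropA (fun _ : Unit => X) (fun _ a b => dist a b)) ∧
    (FamAsdimLE (fun A : {A : Set X // Bornology.IsBounded A} => ↥A.1)
        (fun _ a b => dist a.1 b.1) k →
      FamAsdimLE (fun _ : Unit => X) (fun _ a b => dist a b) k) := by
  exact ⟨propA_of_bounded X, asdimLE_of_bounded k X⟩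
end

section
/- Let (X_i)_{i∈ℕ} be a family of bounded metric spaces which has the property 'asymptotic dimension at most d' piecewise, and assume that the family (X_i)_i has asymptotic dimension at most n for some finite n. Then in fact the family (X_i)_i has asymptotic dimension at most d. -/
/-!
Fix a scale `r`. Cover `X i` by `n + 1` sets `U k` whose `L`-components have diameter at most
`S = S(L)`, where `L` is chosen below in terms of `r` alone. If `i ≥ j ⌈S⌉`, every `L`-component of
every `U k` belongs to the piecewise family, so it has a `(d + 1)`-coloured cover whose
`s`-components have diameter at most `D s`, with `D` independent of `L`. Since distinct
`L`-components are `L`-separated, these covers assemble to a cover of `U k` with the same bound, for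
every `s ≤ L` (`BddCover.of_components`).

It remains to merge the covers of `U 0, …, U n` into one cover of `X i` without increasing the
number of colours. This is the finite union theorem for asymptotic dimension in quantitative form
(`BddCover.union`, `exists_bddCover_iUnion`): if `A` has a cover at scale `r` with bound `T` and `B`
has a cover at scale `R' ≥ 2 r + T`, then uniting the two covers colour by colour works for `A ∪ B`
at scale `r`. Iterating over the `n + 1` sets uses only finitely many scales, determined by `r` and
`D`, and `L` is taken to exceed all of them. The finitely many `i < j ⌈S⌉` are handled by
boundedness of `X i`.
-/

/-!
STATEMENT 11 (Yamauchi): If a family of bounded metric spaces (X_i)_{i∈ℕ} has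
'asymptotic dimension ≤ d' piecewise and has asymptotic dimension at most n for some
finite n, then the family has asymptotic dimension at most d.
-/

open Metric Set

def PW {ι : Type} [Preorder ι] (Z : ι → Type) (ρ : ∀ i, Z i → Z i → ℝ)
    (j : ℕ → ι) : Type :=
  Σ R : ℕ, Σ i : ι, {A : Set (Z i) // j R ≤ i ∧ ∀ a ∈ A, ∀ b ∈ A, ρ i a b ≤ (R : ℝ)}

def pwZ {ι : Type} [Preorder ι] {Z : ι → Type} {ρ : ∀ i, Z i → Z i → ℝ}
    {j : ℕ → ι} (p : PW Z ρ j) : Type := ↥p.2.2.1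

def pwρ {ι : Type} [Preorder ι] {Z : ι → Type} {ρ : ∀ i, Z i → Z i → ℝ}
    {j : ℕ → ι} (p : PW Z ρ j) : pwZ p → pwZ p → ℝ := fun a b => ρ p.2.1 a.1 b.1

/-- `A` is covered by `d + 1` sets whose `r`-components have diameter at most `T`. The covering
sets are not required to be contained in `A`. -/
def BddCover {Z : Type} [MetricSpace Z] (d : ℕ) (A : Set Z) (r : ℕ) (T : ℝ) : Prop :=
  ∃ V : Fin (d + 1) → Set Z, (∀ z ∈ A, ∃ j, z ∈ V j) ∧
    ∀ j, ∀ a ∈ V j, ∀ b ∈ V j, RConn (fun x y : Z => dist x y) (r : ℝ) (V j) a b → dist a b ≤ T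

theorem RConn.symm {Z : Type} [MetricSpace Z] {r : ℝ} {U : Set Z} {a b : Z}
    (h : RConn (fun x y : Z => dist x y) r U a b) : RConn (fun x y : Z => dist x y) r U b a := by
  induction h with
  | refl => exact .refl
  | tail _ h2 ih => exact .head ⟨h2.2.1, h2.1, by simpa [dist_comm] using h2.2.2⟩ ih

/-- Along an `r`-chain in `A ∪ B`, any two consecutive visits to `B` are separated by a chain inside
one `r`-component of `A`, hence are at distance less than `2 r + T ≤ R'`. So all visits to `B` lie in
one `R'`-component of `B`. -/
theorem dist_le_of_rconn_union {Z : Type} [MetricSpace Z] {A B : Set Z} {r R' T T' : ℝ}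
    (hr : 0 ≤ r) (hT : 0 ≤ T) (hT' : 0 ≤ T') (hR' : 2 * r + T ≤ R')
    (hA : ∀ a ∈ A, ∀ b ∈ A, RConn (fun x y : Z => dist x y) r A a b → dist a b ≤ T)
    (hB : ∀ a ∈ B, ∀ b ∈ B, RConn (fun x y : Z => dist x y) R' B a b → dist a b ≤ T')
    {a c : Z} (ha : a ∈ A ∪ B) (h : RConn (fun x y : Z => dist x y) r (A ∪ B) a c) :
    dist a c ≤ T' + 2 * (T + r) := by
  -- Either the chain has not met `B`, or `b₀`, `b₁` are its first and last visits to `B` so far.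
  have key : (a ∈ A ∧ c ∈ A ∧ RConn (fun x y : Z => dist x y) r A a c) ∨
      ∃ b₀ ∈ B, ∃ b₁ ∈ B, RConn (fun x y : Z => dist x y) R' B b₀ b₁ ∧ dist a b₀ ≤ T + r ∧
        (c = b₁ ∨ ∃ c₀ ∈ A, dist b₁ c₀ < r ∧ c ∈ A ∧
          RConn (fun x y : Z => dist x y) r A c₀ c) := by
    induction h with
    | refl =>
      rcases ha with ha | ha
      · exact .inl ⟨ha, ha, .refl⟩
      · exact .inr ⟨a, ha, a, ha, .refl, by simp; linarith, .inl rfl⟩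
    | @tail c c' _ h2 ih =>
      obtain ⟨-, hc', hd⟩ := h2
      rcases ih with ⟨haA, hcA, hch⟩ | ⟨b₀, hb₀, b₁, hb₁, hch, hab, h3⟩
      · rcases hc' with hc' | hc'
        · exact .inl ⟨haA, hc', .tail hch ⟨hcA, hc', hd⟩⟩
        · refine .inr ⟨c', hc', c', hc', .refl, ?_, .inl rfl⟩
          have := hA a haA c hcA hch
          have := dist_triangle a c c'
          linarith
      · rcases h3 with rfl | ⟨c₀, hc₀, hbc, hcA, hch2⟩
        · rcases hc' with hc' | hc'
          · exact .inr ⟨b₀, hb₀, c, hb₁, hch, hab, .inr ⟨c', hc', hd, hc', .refl⟩⟩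
          · exact .inr ⟨b₀, hb₀, c', hc', .tail hch ⟨hb₁, hc', by linarith⟩, hab, .inl rfl⟩
        · rcases hc' with hc' | hc'
          · exact .inr ⟨b₀, hb₀, b₁, hb₁, hch, hab,
              .inr ⟨c₀, hc₀, hbc, hc', .tail hch2 ⟨hcA, hc', hd⟩⟩⟩
          · refine .inr ⟨b₀, hb₀, c', hc', .tail hch ⟨hb₁, hc', ?_⟩, hab, .inl rfl⟩
            have := hA c₀ hc₀ c hcA hch2
            have := dist_triangle4 b₁ c₀ c c'
            linarith
  rcases key with ⟨haA, hcA, hch⟩ | ⟨b₀, hb₀, b₁, hb₁, hch, hab, h3⟩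
  · have := hA a haA c hcA hch
    linarith
  · have h4 := hB b₀ hb₀ b₁ hb₁ hch
    have h5 := dist_triangle4 a b₀ b₁ c
    have h6 : dist b₁ c ≤ T + r := by
      rcases h3 with rfl | ⟨c₀, hc₀, hbc, hcA, hch2⟩
      · simp; linarith
      · have := hA c₀ hc₀ c hcA hch2
        have := dist_triangle b₁ c₀ c
        linarith
    linarith

theorem BddCover.union {Z : Type} [MetricSpace Z] {d : ℕ} {A B : Set Z} {r R' : ℕ} {T T' : ℝ}
    (hT : 0 ≤ T) (hT' : 0 ≤ T') (hR' : 2 * r + T ≤ R')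
    (hA : BddCover d A r T) (hB : BddCover d B R' T') :
    BddCover d (A ∪ B) r (T' + 2 * (T + r)) := by
  obtain ⟨V, hV, hV'⟩ := hA
  obtain ⟨W, hW, hW'⟩ := hB
  refine ⟨fun j => V j ∪ W j, ?_, ?_⟩
  · rintro z (hz | hz)
    · exact (hV z hz).imp fun j h => .inl h
    · exact (hW z hz).imp fun j h => .inr h
  · intro j a ha b _ h
    exact dist_le_of_rconn_union (Nat.cast_nonneg r) hT hT' hR' (hV' j) (hW' j) ha h

theorem BddCover.mono {Z : Type} [MetricSpace Z] {d : ℕ} {A B : Set Z} {r : ℕ} {T T' : ℝ}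
    (hAB : B ⊆ A) (hT : T ≤ T') (h : BddCover d A r T) : BddCover d B r T' := by
  obtain ⟨V, hV, hV'⟩ := h
  exact ⟨V, fun z hz => hV z (hAB hz), fun j a ha b hb hab => (hV' j a ha b hb hab).trans hT⟩

/-- Uniform finite union theorem: a bound for the union of `m` sets at scale `r` only depends on
the control function `D` of these sets on the scales up to some `L` depending on `m`, `r`, `D`. -/
theorem exists_bddCover_iUnion (d : ℕ) (D : ℕ → ℝ) (m r : ℕ) :
    ∃ (L : ℕ) (T : ℝ), 0 ≤ T ∧ ∀ (Z : Type) [MetricSpace Z] (U : Fin m → Set Z),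
      (∀ k s, 0 < s → s ≤ L → BddCover d (U k) s (D s)) → BddCover d (⋃ k, U k) r T := by
  induction m with
  | zero =>
    refine ⟨0, 0, le_rfl, fun Z _ U _ => ⟨fun _ => ∅, ?_, ?_⟩⟩
    · simp
    · simp
  | succ m ih =>
    obtain ⟨L, T, hT, h⟩ := ih
    -- The last set is covered at a scale coarse enough for `BddCover.union`.
    obtain ⟨R', hR'⟩ := exists_nat_ge (2 * r + T)
    have hR1 : 2 * r + T ≤ ((R' + 1 : ℕ) : ℝ) := by push_cast; linarith
    refine ⟨max L (R' + 1), |D (R' + 1)| + 2 * (T + r), by positivity, fun Z _ U hU => ?_⟩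
    have h1 := h Z (fun k => U k.castSucc)
      fun k s hs hsL => hU k.castSucc s hs (hsL.trans (le_max_left _ _))
    have h2 := (hU (Fin.last m) (R' + 1) (Nat.succ_pos _) (le_max_right _ _)).mono
      subset_rfl (le_abs_self _)
    refine (h1.union hT (abs_nonneg _) hR1 h2).mono ?_ le_rfl
    intro z hz
    obtain ⟨k, hk⟩ := mem_iUnion.1 hz
    induction k using Fin.lastCases with
    | last => exact .inr hk
    | cast k => exact .inl (mem_iUnion.2 ⟨k, hk⟩)

/-- Covers at scale `s ≤ L` of the `L`-components of `U` assemble to a cover of `U` with the same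
bound, because an `s`-chain in `U` never leaves an `L`-component. -/
theorem BddCover.of_components {Z : Type} [MetricSpace Z] {d : ℕ} {U : Set Z} {s L : ℕ} {S T : ℝ}
    (hsL : s ≤ L)
    (hU : ∀ a ∈ U, ∀ b ∈ U, RConn (fun x y : Z => dist x y) (L : ℝ) U a b → dist a b ≤ S)
    (h : ∀ A : Set Z, (∀ a ∈ A, ∀ b ∈ A, dist a b ≤ S) → BddCover d A s T) :
    BddCover d U s T := by
  choose! W hW hW' using h
  let C : Z → Set Z := fun x => {y | y ∈ U ∧ RConn (fun x y : Z => dist x y) (L : ℝ) U x y}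
  have hC : ∀ x, ∀ a ∈ C x, ∀ b ∈ C x, dist a b ≤ S := fun x a ha b hb =>
    hU a ha.1 b hb.1 (Relation.ReflTransGen.trans ha.2.symm hb.2)
  refine ⟨fun j => {x | x ∈ U ∧ x ∈ W (C x) j}, ?_, ?_⟩
  · intro z hz
    obtain ⟨j, hj⟩ := hW (C z) (hC z) z ⟨hz, .refl⟩
    exact ⟨j, hz, hj⟩
  · intro j a ha b hb hab
    have key : C a = C b ∧ RConn (fun x y : Z => dist x y) (s : ℝ) (W (C a) j) a b := by
      clear hb
      induction hab with
      | refl => exact ⟨rfl, .refl⟩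
      | @tail b c _ h2 ih =>
        obtain ⟨hb, hc, hd⟩ := h2
        have hL : dist b c < (L : ℝ) := lt_of_lt_of_le hd (by exact_mod_cast hsL)
        have hbc : RConn (fun x y : Z => dist x y) (L : ℝ) U b c := .single ⟨hb.1, hc.1, hL⟩
        have hCbc : C b = C c := by
          ext y
          exact ⟨fun hy => ⟨hy.1, Relation.ReflTransGen.trans hbc.symm hy.2⟩,
            fun hy => ⟨hy.1, Relation.ReflTransGen.trans hbc hy.2⟩⟩
        have hac := ih.1.trans hCbc
        refine ⟨hac, ih.2.tail ⟨?_, ?_, hd⟩⟩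
        · rw [ih.1]; exact hb.2
        · rw [hac]; exact hc.2
    refine hW' (C a) (hC a) j a ha.2 b ?_ key.2
    rw [key.1]; exact hb.2

/-- The cover of the subspace `A` provided by the piecewise hypothesis, viewed in the ambient
space. -/
theorem BddCover.of_subtype {Z : Type} [MetricSpace Z] {d : ℕ} {A : Set Z} {s : ℕ} {T : ℝ}
    (V : Fin (d + 1) → Set A) (hV : ∀ z : A, ∃ j, z ∈ V j)
    (hV' : ∀ j, ∀ a ∈ V j, ∀ b ∈ V j,
      RConn (fun x y : A => dist x.1 y.1) (s : ℝ) (V j) a b → dist a.1 b.1 ≤ T) :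
    BddCover d A s T := by
  refine ⟨fun j => Subtype.val '' V j, ?_, ?_⟩
  · intro z hz
    obtain ⟨j, hj⟩ := hV ⟨z, hz⟩
    exact ⟨j, ⟨z, hz⟩, hj, rfl⟩
  · rintro j _ ⟨a, ha, rfl⟩ b hb hab
    have key : ∃ b' ∈ V j, b'.1 = b ∧ RConn (fun x y : A => dist x.1 y.1) (s : ℝ) (V j) a b' := by
      clear hb
      induction hab with
      | refl => exact ⟨a, ha, rfl, .refl⟩
      | tail _ h2 ih =>
        obtain ⟨b', hb', rfl, hch⟩ := ih
        obtain ⟨-, ⟨c', hc', rfl⟩, hd⟩ := h2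
        exact ⟨c', hc', rfl, hch.tail ⟨hb', hc', hd⟩⟩
    obtain ⟨b', hb', rfl, hch⟩ := key
    exact hV' j a ha b' hb' hch

theorem piecewise_asdim_bounds_asdim_of_bounded_families
    (X : ℕ → Type) [inst : ∀ i, MetricSpace (X i)]
    (hbd : ∀ i, Bornology.IsBounded (Set.univ : Set (X i)))
    (d n : ℕ)
    -- the family has asymptotic dimension at most d piecewise
    (hpw : ∃ j : ℕ → ℕ,
      FamAsdimLE (fun p : PW X (fun i (a b : X i) => dist a b) j => pwZ p)
        (fun p => pwρ p) d)
    -- and finite asymptotic dimension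
    (hfin : FamAsdimLE X (fun i (a b : X i) => dist a b) n) :
    FamAsdimLE X (fun i (a b : X i) => dist a b) d := by
  obtain ⟨j, hj⟩ := hpw
  choose! D hD using hj
  intro r _
  obtain ⟨L, T, -, hLT⟩ := exists_bddCover_iUnion d D (n + 1) r
  -- `L + 1` because `hfin` requires a positive scale.
  obtain ⟨S, hS⟩ := hfin (L + 1) (Nat.succ_pos L)
  obtain ⟨R, hR⟩ := exists_nat_ge S
  refine ⟨max T (∑ i ∈ Finset.range (j R), Metric.diam (univ : Set (X i))), fun i => ?_⟩
  by_cases hi : j R ≤ i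
  · obtain ⟨U, hU, hU'⟩ := hS i
    have hcov : BddCover d (⋃ k, U k) r T := by
      refine hLT (X i) U fun k s hs hsL => ?_
      refine BddCover.of_components (hsL.trans (Nat.le_succ L)) (hU' k) fun A hA => ?_
      obtain ⟨V, hV, hV'⟩ :=
        hD s hs ⟨R, i, A, hi, fun a ha b hb => (hA a ha b hb).trans hR⟩
      exact BddCover.of_subtype V hV hV'
    obtain ⟨V, hV, hV'⟩ := hcov
    exact ⟨V, fun z => hV z (mem_iUnion.2 (hU z)),
      fun k a ha b hb hab => (hV' k a ha b hb hab).trans (le_max_left _ _)⟩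
  · refine ⟨fun _ => univ, fun _ => ⟨0, mem_univ _⟩, fun _ a _ b _ _ => ?_⟩
    refine le_trans ?_ (le_max_right _ _)
    refine (Metric.dist_le_diam_of_mem (hbd i) (mem_univ a) (mem_univ b)).trans ?_
    exact Finset.single_le_sum (f := fun i => Metric.diam (univ : Set (X i)))
      (fun _ _ => Metric.diam_nonneg) (Finset.mem_range.2 (not_le.1 hi))
end
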